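/- Left contraction for E-separation: for every directed graph G = (V, E_d) and all subsets A, B, C, D ⊆ V, if (A, B, C) ∈ I_E^G and (D, B, A ∪ C) ∈ I_E^G, then (A ∪ D, B, C) ∈ I_E^G. -/

import Mathlib

namespace ESepPaper

/-- A directed mixed graph: directed edges and bidirected edges over a node type `V`.
A directed graph (DG) is a DMG with `Ebi = ∅`. -/
structure DMG (V : Type) where
  Ed : Set (V × V)
  Ebi : Set (Sym2 V)

variable {V : Type}

/-- `G.ancestor u v` : there is a directed path `u → … → v` (possibly trivial). -/
def DMG.ancestor (G : DMG V) : V → V → Prop :=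
  Relation.ReflTransGen (fun u v => (u, v) ∈ G.Ed)

/-- Ancestors of a set `C`. -/
def DMG.anc (G : DMG V) (C : Set V) : Set V := {u | ∃ v ∈ C, G.ancestor u v}

/-- Strongly connected component of `v`. -/
def DMG.scc (G : DMG V) (v : V) : Set V := {w | G.ancestor w v ∧ G.ancestor v w}

/-- Parents of a set of nodes. -/
def DMG.pa (G : DMG V) (S : Set V) : Set V := {w | ∃ v ∈ S, (w, v) ∈ G.Ed}

/-- Kind of a traversed edge on a walk: forward directed, backward directed, or bidirected. -/
inductive LinkType | fwd | bwd | bi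
deriving DecidableEq

/-- Validity of a link of kind `t` between consecutive walk nodes `u` and `v`. -/
def DMG.linkOK (G : DMG V) (u v : V) : LinkType → Prop
  | .fwd => (u, v) ∈ G.Ed
  | .bwd => (v, u) ∈ G.Ed
  | .bi => s(u, v) ∈ G.Ebi

/-- Arrowhead at the second (right) endpoint of the link. -/
def LinkType.headR : LinkType → Prop
  | .fwd => True
  | .bwd => False
  | .bi => True

/-- Arrowhead at the first (left) endpoint of the link. -/
def LinkType.headL : LinkType → Prop
  | .fwd => False
  | .bwd => True
  | .bi => True

/-- Tail at the second (right) endpoint. -/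
def LinkType.tailR (t : LinkType) : Prop := t = .bwd

/-- Tail at the first (left) endpoint. -/
def LinkType.tailL (t : LinkType) : Prop := t = .fwd

/-- Walks in a DMG. -/
inductive DMG.Walk (G : DMG V) : V → V → Type
  | nil (v : V) : DMG.Walk G v v
  | cons {u v w : V} (t : LinkType) (h : G.linkOK u v t) (p : DMG.Walk G v w) : DMG.Walk G u w

/-- An interior node on a walk, whose incoming link is `t1` and outgoing link is `t2`,
is a collider iff both links have an arrowhead at it. -/
def colliderAt (t1 t2 : LinkType) : Prop := t1.headR ∧ t2.headL

/-- An interior non-collider `v` between neighbours `u` (incoming link `t1`) and `w`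
(outgoing link `t2`) is unblockable: on every side where the link has a tail at `v`, the
corresponding neighbour lies in `scc_G(v)` (left-chain/right-chain/fork cases). -/
def unblockableAt (G : DMG V) (u v w : V) (t1 t2 : LinkType) : Prop :=
  (t1.tailR → u ∈ G.scc v) ∧ (t2.tailL → w ∈ G.scc v)

namespace DMG.Walk

variable {G : DMG V}

/-- First node of a walk. -/
def first {a b : V} (_ : G.Walk a b) : V := a

def length : {a b : V} → G.Walk a b → ℕ
  | _, _, .nil _ => 0
  | _, _, .cons _ _ p => p.length + 1

def support : {a b : V} → G.Walk a b → List V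
  | a, _, .nil _ => [a]
  | a, _, .cons _ _ p => a :: p.support

/-- Auxiliary: σ-openness of the remainder of a walk, where `u` is the previous node and
`t1` the link from `u` into the current first node. -/
def sigmaOpenAux (C : Set V) : (u : V) → LinkType → {b c : V} → G.Walk b c → Prop
  | _, _, _, _, .nil _ => True
  | u, t1, v, _, .cons t2 _ q =>
      ((colliderAt t1 t2 → v ∈ G.anc C) ∧
       (¬ colliderAt t1 t2 → ¬ unblockableAt G u v q.first t1 t2 → v ∉ C)) ∧
      sigmaOpenAux C v t2 q

/-- The walk is σ-open given `C`: every collider on it is an ancestor of a node of `C`, and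
no blockable non-collider on it lies in `C`. -/
def sigmaOpen (C : Set V) : {a b : V} → G.Walk a b → Prop
  | _, _, .nil _ => True
  | a, _, .cons t _ q => sigmaOpenAux C a t q

/-- All links are forward directed. -/
def IsDirected : {a b : V} → G.Walk a b → Prop
  | _, _, .nil _ => True
  | _, _, .cons t _ p => t = .fwd ∧ p.IsDirected

/-- Interior nodes of the walk (all nodes except the two endpoints). -/
def interior {a b : V} (p : G.Walk a b) : List V := p.support.tail.dropLast

/-- Arrowhead at the first endpoint. -/
def headAtStart : {a b : V} → G.Walk a b → Prop
  | _, _, .nil _ => False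
  | _, _, .cons t _ _ => t.headL

def headAtEndAux : LinkType → {a b : V} → G.Walk a b → Prop
  | t, _, _, .nil _ => t.headR
  | _, _, _, .cons t _ q => headAtEndAux t q

/-- Arrowhead at the last endpoint. -/
def headAtEnd : {a b : V} → G.Walk a b → Prop
  | _, _, .nil _ => False
  | _, _, .cons t _ q => headAtEndAux t q

def noCollidersAux : LinkType → {a b : V} → G.Walk a b → Prop
  | _, _, _, .nil _ => True
  | t1, _, _, .cons t2 _ q => ¬ colliderAt t1 t2 ∧ noCollidersAux t2 q

/-- There is no collider on the walk. -/
def NoColliders : {a b : V} → G.Walk a b → Prop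
  | _, _, .nil _ => True
  | _, _, .cons t _ q => noCollidersAux t q

def collidersInAux (S : Set V) : LinkType → {a b : V} → G.Walk a b → Prop
  | _, _, _, .nil _ => True
  | t1, v, _, .cons t2 _ q => (colliderAt t1 t2 → v ∈ S) ∧ collidersInAux S t2 q

/-- Every collider on the walk lies in `S`. -/
def CollidersIn (S : Set V) : {a b : V} → G.Walk a b → Prop
  | _, _, .nil _ => True
  | _, _, .cons t _ q => collidersInAux S t q

def noncollUnblAux : (u : V) → LinkType → {b c : V} → G.Walk b c → Prop
  | _, _, _, _, .nil _ => True
  | u, t1, v, _, .cons t2 _ q =>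
      (¬ colliderAt t1 t2 → unblockableAt G u v q.first t1 t2) ∧ noncollUnblAux v t2 q

/-- Every interior non-collider on the walk is unblockable. -/
def NoncollidersUnblockable : {a b : V} → G.Walk a b → Prop
  | _, _, .nil _ => True
  | a, _, .cons t _ q => noncollUnblAux a t q

/-- The set of edges occurring on a walk (directed edges as ordered pairs in `E_d`,
bidirected edges as unordered pairs). -/
def edges : {a b : V} → G.Walk a b → Set ((V × V) ⊕ Sym2 V)
  | _, _, .nil _ => ∅
  | a, _, .cons t _ p =>
      insert (match t with
        | .fwd => Sum.inl (a, p.first)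
        | .bwd => Sum.inl (p.first, a)
        | .bi => Sum.inr s(a, p.first)) p.edges

/-- Concatenation of walks. -/
def append : {a b c : V} → G.Walk a b → G.Walk b c → G.Walk a c
  | _, _, _, .nil _, q => q
  | _, _, _, .cons t h p, q => .cons t h (p.append q)

/-- A walk `v_0, …, v_{n+1}` is a path if no node besides the final endpoint occurs more
than once, i.e. `v_0, …, v_n` are pairwise distinct. -/
def IsPath {a b : V} (p : G.Walk a b) : Prop := p.support.dropLast.Nodup

end DMG.Walk

/-- `A` is σ-separated from `B` given `C` in `G`: every walk from a node of `A` to a node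
of `B` is σ-blocked given `C`. -/
def DMG.sigmaSep (G : DMG V) (A B C : Set V) : Prop :=
  ∀ a ∈ A, ∀ b ∈ B, ∀ p : G.Walk a b, ¬ p.sigmaOpen C

/-- The lifted dependency graph of `G`, on two copies of `V`
(`Sum.inl` is the past copy `V_0`, `Sum.inr` the future copy `V_1`). -/
def DMG.lift (G : DMG V) : DMG (V ⊕ V) where
  Ed := {e | ∃ u v, (u, v) ∈ G.Ed ∧
        (e = (Sum.inl u, Sum.inl v) ∨ e = (Sum.inl u, Sum.inr v) ∨
         e = (Sum.inr u, Sum.inr v))}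
  Ebi := {e | ∃ u v, s(u, v) ∈ G.Ebi ∧
        (e = s(Sum.inl u, Sum.inl v) ∨ e = s(Sum.inl u, Sum.inr v) ∨
         e = s(Sum.inr u, Sum.inl v) ∨ e = s(Sum.inr u, Sum.inr v))}

/-- `B` is E-separated from `A` given `C` in `G`:
`A_0` is σ-separated from `B_1` given `C_0 ∪ (C_1 \ B_1)` in the lifted dependency graph. -/
def DMG.ESep (G : DMG V) (A B C : Set V) : Prop :=
  G.lift.sigmaSep (Sum.inl '' A) (Sum.inr '' B)
    ((Sum.inl '' C) ∪ ((Sum.inr '' C) \ (Sum.inr '' B)))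

/-- The independence model `I_E^G` of E-separation triples. -/
def DMG.IE (G : DMG V) : Set (Set V × Set V × Set V) :=
  {t | G.ESep t.1 t.2.1 t.2.2}


/-- The latent projection of `G` onto the observed nodes `O`: a directed edge when there is
a non-trivial directed walk whose interior nodes are all latent, and a bidirected edge when
there is a non-trivial collider-free walk with arrowheads at both endpoints whose interior
nodes are all latent. -/
def DMG.latentProj (G : DMG V) (O : Set V) : DMG O where
  Ed := {e | ∃ p : G.Walk e.1.val e.2.val,
          p.IsDirected ∧ 0 < p.length ∧ ∀ x ∈ p.interior, x ∉ O}
  Ebi := {e | ∃ u v : O, e = s(u, v) ∧ ∃ p : G.Walk u.val v.val,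
          p.headAtStart ∧ p.headAtEnd ∧ p.NoColliders ∧ 0 < p.length ∧
          ∀ x ∈ p.interior, x ∉ O}

/-- The last edge of the walk `p` before entering `scc_G(w)` has an arrowhead at its
endpoint in `scc_G(w)` (vacuous if the walk never leaves `scc_G(w)`). -/
def DMG.lastEdgeInto (G : DMG V) {a b : V} (w : V) (p : G.Walk a b) : Prop :=
  (∀ x ∈ p.support, x ∈ G.scc w) ∨
  ∃ (x y : V) (t : LinkType) (h : G.linkOK x y t) (p₁ : G.Walk a x) (p₂ : G.Walk y b),
    p = p₁.append (.cons t h p₂) ∧ x ∉ G.scc w ∧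
    (∀ z ∈ p₂.support, z ∈ G.scc w) ∧ t.headR

/-- An (asymmetric) inducing path from `v` to `w`: a non-trivial path such that every
collider on it is an ancestor of `v` or `w`, every interior non-collider is unblockable,
and the last edge before entering `scc_G(w)` points into `scc_G(w)`. -/
def DMG.IsInducingPath (G : DMG V) {v w : V} (p : G.Walk v w) : Prop :=
  0 < p.length ∧ p.IsPath ∧
  p.CollidersIn (G.anc {v, w}) ∧ p.NoncollidersUnblockable ∧ G.lastEdgeInto w p

/-!
Let `p` be a σ-open walk from `D_0` to `B_1` given `K = C_0 ∪ (C_1 \ B_1)`. Enlarging `C` to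
`A ∪ C` can only block `p` at a blockable non-collider `a_0` or `a_1` with `a ∈ A`, and then `A_0`
is already connected to `B_1` given `K`. From `a_0` the rest of `p` is an open walk. At `a_1` one of
the two links has a tail. If the outgoing link is `a_1 → x`, start with `a_0 → x` instead. If the
incoming link is `u ← a_1`, start with `a_0 → u ← a_1`, creating a collider at `u ∈ V_1`. As `p`
starts in `V_0` and no directed edge leads from `V_1` to `V_0`, following `p` backwards from `u`
along directed edges stays in `V_1` and ends at a collider of `p`, so `u` is an ancestor of `K`.
-/

theorem DMG.anc_mono (G : DMG V) {K K' : Set V} (h : K ⊆ K') : G.anc K ⊆ G.anc K' :=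
  fun _ ⟨v, hv, hanc⟩ => ⟨v, h hv, hanc⟩

theorem DMG.mem_anc_of_mem_Ed (G : DMG V) {K : Set V} {u v : V} (huv : (u, v) ∈ G.Ed)
    (hv : v ∈ G.anc K) : u ∈ G.anc K := by
  obtain ⟨w, hw, hanc⟩ := hv
  exact ⟨w, hw, .head huv hanc⟩

theorem LinkType.not_headR_iff {t : LinkType} : ¬ t.headR ↔ t.tailR := by
  cases t <;> simp [headR, tailR]

theorem LinkType.not_headL_iff {t : LinkType} : ¬ t.headL ↔ t.tailL := by
  cases t <;> simp [headL, tailL]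

theorem LinkType.tailR.headL {t : LinkType} (h : t.tailR) : t.headL := by
  cases h
  trivial

theorem not_colliderAt_iff {t₁ t₂ : LinkType} :
    ¬ colliderAt t₁ t₂ ↔ t₁.tailR ∨ t₂.tailL := by
  rw [colliderAt, not_and_or, LinkType.not_headR_iff, LinkType.not_headL_iff]

theorem DMG.Walk.sigmaOpenAux_iff_of_headR {G : DMG V} {K : Set V} {u u' b c : V}
    {t t' : LinkType} (ht : t.headR) (ht' : t'.headR) (p : G.Walk b c) :
    p.sigmaOpenAux K u t ↔ p.sigmaOpenAux K u' t' := by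
  cases p with
  | nil => rfl
  | cons =>
    simp only [sigmaOpenAux, colliderAt, unblockableAt, ← LinkType.not_headR_iff, ht, ht',
      not_true_eq_false, false_imp_iff, true_and]

namespace DMG

variable {G : DMG V} {K K' : Set (V ⊕ V)}

theorem mem_range_inr_of_mem_lift_Ed {a : V} {u : V ⊕ V} (h : (Sum.inr a, u) ∈ G.lift.Ed) :
    u ∈ Set.range Sum.inr := by
  obtain ⟨x, y, -, h | h | h⟩ := h <;> simp_all

theorem inl_mem_lift_Ed_of_inr_mem {a : V} {u : V ⊕ V} (h : (Sum.inr a, u) ∈ G.lift.Ed) :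
    (Sum.inl a, u) ∈ G.lift.Ed := by
  obtain ⟨x, y, hxy, h | h | h⟩ := h
  · simp at h
  · simp at h
  · obtain ⟨rfl, rfl⟩ : a = x ∧ u = Sum.inr y := by simpa using h
    exact ⟨a, y, hxy, .inr (.inl rfl)⟩

/-- The invariant carried along a σ-open walk that starts in the past copy `V_0`: whenever the
walk leaves a node `u` of the future copy `V_1` against a directed edge, `u` is an ancestor of the
conditioning set `K`. Here `t` is the link by which the walk leaves `u`. -/
def FutureTailAncestral (G : DMG V) (K : Set (V ⊕ V)) (u : V ⊕ V) (t : LinkType) : Prop :=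
  t.tailR → u ∈ Set.range Sum.inr → u ∈ G.lift.anc K

theorem futureTailAncestral_inl (a : V) (t : LinkType) :
    G.FutureTailAncestral K (Sum.inl a) t := by
  rintro - ⟨w, hw⟩
  cases hw

theorem FutureTailAncestral.next {u v : V ⊕ V} {t₁ t₂ : LinkType}
    (hu : G.FutureTailAncestral K u t₁) (hlink : G.lift.linkOK u v t₁)
    (hcollider : colliderAt t₁ t₂ → v ∈ G.lift.anc K) : G.FutureTailAncestral K v t₂ := by
  rintro ht₂ ⟨w, rfl⟩
  by_cases hhead : t₁.headR
  · exact hcollider ⟨hhead, ht₂.headL⟩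
  · have ht₁ : t₁.tailR := LinkType.not_headR_iff.1 hhead
    cases ht₁
    exact G.lift.mem_anc_of_mem_Ed hlink (hu rfl (mem_range_inr_of_mem_lift_Ed hlink))

theorem exists_sigmaOpen_inl_of_noncollider_inr {a : V} {u x b : V ⊕ V} {t₁ t₂ : LinkType}
    (hu : G.FutureTailAncestral K u t₁) (hlink₁ : G.lift.linkOK u (Sum.inr a) t₁)
    (hlink₂ : G.lift.linkOK (Sum.inr a) x t₂) {q : G.lift.Walk x b}
    (hnc : ¬ colliderAt t₁ t₂) (hopen : (Walk.cons t₂ hlink₂ q).sigmaOpenAux K u t₁) :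
    ∃ p : G.lift.Walk (Sum.inl a) b, p.sigmaOpen K := by
  rcases not_colliderAt_iff.1 hnc with ht₁ | ht₂
  · cases ht₁
    have hanc : u ∈ G.lift.anc K := hu rfl (mem_range_inr_of_mem_lift_Ed hlink₁)
    have hcollider : colliderAt .fwd .bwd := ⟨trivial, trivial⟩
    exact ⟨.cons .fwd (inl_mem_lift_Ed_of_inr_mem hlink₁) (.cons .bwd hlink₁ (.cons t₂ hlink₂ q)),
      ⟨fun _ => hanc, fun h => absurd hcollider h⟩, hopen⟩
  · cases ht₂
    exact ⟨.cons .fwd (inl_mem_lift_Ed_of_inr_mem hlink₂) q,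
      (q.sigmaOpenAux_iff_of_headR (t := .fwd) (t' := .fwd) trivial trivial).1 hopen.2⟩

variable {A D : Set V} {S : Set (V ⊕ V)}

theorem sigmaSep.notMem_of_noncollider (hsep : G.lift.sigmaSep (Sum.inl '' A) S K)
    {u v x b : V ⊕ V} {t₁ t₂ : LinkType} (hb : b ∈ S)
    (hu : G.FutureTailAncestral K u t₁) (hlink₁ : G.lift.linkOK u v t₁)
    (hlink₂ : G.lift.linkOK v x t₂) {q : G.lift.Walk x b}
    (hnc : ¬ colliderAt t₁ t₂) (hopen : (Walk.cons t₂ hlink₂ q).sigmaOpenAux K u t₁) :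
    v ∉ Sum.inl '' A ∪ Sum.inr '' A := by
  rintro (⟨a, ha, rfl⟩ | ⟨a, ha, rfl⟩)
  · exact hsep _ ⟨a, ha, rfl⟩ b hb (.cons t₂ hlink₂ q) hopen.2
  · obtain ⟨p, hp⟩ := exists_sigmaOpen_inl_of_noncollider_inr hu hlink₁ hlink₂ hnc hopen
    exact hsep _ ⟨a, ha, rfl⟩ b hb p hp

theorem sigmaSep.sigmaOpenAux_of_subset (hsep : G.lift.sigmaSep (Sum.inl '' A) S K)
    (hK : K ⊆ K') (hdiff : K' \ K ⊆ Sum.inl '' A ∪ Sum.inr '' A)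
    {u v b : V ⊕ V} {t : LinkType} {p : G.lift.Walk v b} (hb : b ∈ S)
    (hu : G.FutureTailAncestral K u t) (hlink : G.lift.linkOK u v t)
    (hopen : p.sigmaOpenAux K u t) : p.sigmaOpenAux K' u t := by
  induction p generalizing u t with
  | nil => trivial
  | cons t₂ hlink₂ q ih =>
    have ⟨⟨hcollider, hblockable⟩, hq⟩ := hopen
    refine ⟨⟨fun hc => G.lift.anc_mono hK (hcollider hc), fun hnc hblock hv => ?_⟩,
      ih hb (hu.next hlink hcollider) hlink₂ hq⟩
    exact hsep.notMem_of_noncollider hb hu hlink hlink₂ hnc hopen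
      (hdiff ⟨hv, hblockable hnc hblock⟩)

theorem sigmaSep.lift_contraction (hA : G.lift.sigmaSep (Sum.inl '' A) S K)
    (hD : G.lift.sigmaSep (Sum.inl '' D) S K') (hK : K ⊆ K')
    (hdiff : K' \ K ⊆ Sum.inl '' A ∪ Sum.inr '' A) :
    G.lift.sigmaSep (Sum.inl '' (A ∪ D)) S K := by
  rintro _ ⟨a, ha | ha, rfl⟩ b hb p hopen
  · exact hA _ ⟨a, ha, rfl⟩ b hb p hopen
  · refine hD _ ⟨a, ha, rfl⟩ b hb p ?_
    cases p with
    | nil => trivial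
    | cons t hlink q =>
      exact hA.sigmaOpenAux_of_subset hK hdiff hb (futureTailAncestral_inl a t) hlink hopen

end DMG

theorem left_contraction_general (G : DMG V) (A B C D : Set V) (hA : (A, B, C) ∈ G.IE)
    (hD : (D, B, A ∪ C) ∈ G.IE) : (A ∪ D, B, C) ∈ G.IE := by
  refine DMG.sigmaSep.lift_contraction hA hD ?_ ?_
  · gcongr <;> exact Set.subset_union_right
  · rintro x ⟨⟨c, hc | hc, rfl⟩ | ⟨⟨c, hc | hc, rfl⟩, hB⟩, hx⟩
    · exact .inl ⟨c, hc, rfl⟩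
    · exact absurd (.inl ⟨c, hc, rfl⟩) hx
    · exact .inr ⟨c, hc, rfl⟩
    · exact absurd (.inr ⟨⟨c, hc, rfl⟩, hB⟩) hx

/-- Left contraction (LC) for E-separation. -/
theorem left_contraction {V : Type} [Fintype V] (G : DMG V) (hG : G.Ebi = ∅)
    (A B C D : Set V) (h1 : (A, B, C) ∈ G.IE) (h2 : (D, B, A ∪ C) ∈ G.IE) :
    (A ∪ D, B, C) ∈ G.IE :=
  left_contraction_general G A B C D h1 h2

end ESepPaper
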